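/- At the fixed point p₁ with m̄² = 5/4 and ḡ = −81/(64π²), the Jacobian matrix of the Ward-constrained melonic flow (β_m, β_g) with respect to the variables (m̄², ḡ) has two real strictly negative eigenvalues; equivalently, its trace is strictly negative, its determinant is strictly positive, and the square of its trace is at least four times its determinant (numerically the critical exponents are (θ₁, θ₂) ≈ (−4.4, −0.3)), so p₁ has two relevant (attractive toward the UV) directions. -/

import Mathlib

open Real

/-- `Ω(ḡ, m̄²) := (1 + m̄²)² − π²ḡ`. -/
noncomputable def Omega (g m : ℝ) : ℝ := (1 + m) ^ 2 - π ^ 2 * g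

/-- `Ω′(ḡ, m̄²) := π²ḡ(1+m̄²)³(1 − 8/(3(1+m̄²)²)) + 6π⁴ḡ²`. -/
noncomputable def OmegaP (g m : ℝ) : ℝ :=
  π ^ 2 * g * (1 + m) ^ 3 * (1 - 8 / (3 * (1 + m) ^ 2)) + 6 * π ^ 4 * g ^ 2

/-- The Ward-constrained melonic anomalous dimension
`η(ḡ, m̄²) := 4π²ḡ((1+m̄²)³ + 9π²ḡ) / ((1+m̄²)⁵ − Ω′(ḡ, m̄²))`. -/
noncomputable def eta (g m : ℝ) : ℝ :=
  4 * π ^ 2 * g * ((1 + m) ^ 3 + 9 * π ^ 2 * g) / ((1 + m) ^ 5 - OmegaP g m)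

/-- `β_m = −(2+η)m̄² − 10π²ḡ(1+η/6)/(1+m̄²)²` for the Ward-constrained melonic flow. -/
noncomputable def betaM (g m : ℝ) : ℝ :=
  -(2 + eta g m) * m - 10 * π ^ 2 * g * (1 + eta g m / 6) / (1 + m) ^ 2

/-- `β_g = −ηḡΩ/(1+m̄²)² + 2π²ḡ²β_m/(1+m̄²)³` for the Ward-constrained melonic flow. -/
noncomputable def betaG (g m : ℝ) : ℝ :=
  -eta g m * g * Omega g m / (1 + m) ^ 2 + 2 * π ^ 2 * g ^ 2 * betaM g m / (1 + m) ^ 3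

/-- The mass coordinate of the fixed point `p₁`. -/
noncomputable def m1 : ℝ := 5 / 4

/-- The coupling coordinate of the fixed point `p₁`. -/
noncomputable def g1 : ℝ := -81 / (64 * π ^ 2)

/-- Entry `∂β_m/∂m̄²` of the Jacobian of the Ward-constrained flow at `p₁`. -/
noncomputable def J11 : ℝ := deriv (fun m => betaM g1 m) m1

/-- Entry `∂β_m/∂ḡ` of the Jacobian of the Ward-constrained flow at `p₁`. -/
noncomputable def J12 : ℝ := deriv (fun g => betaM g m1) g1

/-- Entry `∂β_g/∂m̄²` of the Jacobian of the Ward-constrained flow at `p₁`. -/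
noncomputable def J21 : ℝ := deriv (fun m => betaG g1 m) m1

/-- Entry `∂β_g/∂ḡ` of the Jacobian of the Ward-constrained flow at `p₁`. -/
noncomputable def J22 : ℝ := deriv (fun g => betaG g m1) g1

/-!
The factor `(1 + m̄²)³ + 9π²ḡ` of the numerator of `η` vanishes at `p₁`, so `η` vanishes there, and
so does `β_m`. Hence the differential of `η` at `p₁` only sees that factor, and the differential of
`β_g` is a combination of those of `η` and `β_m`, with coefficients evaluated at `p₁`.
Differentiating along an arbitrary curve through `p₁` yields both entries of each row of the
Jacobian at once; the entries are rational up to powers of `π` that cancel in the determinant.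
-/

lemma hasDerivAt_mul_of_eq_zero {𝕜 A : Type*} [NontriviallyNormedField 𝕜] [NormedRing A]
    [NormedAlgebra 𝕜 A] {f h : 𝕜 → A} {f' : A} {t : 𝕜} (hf : HasDerivAt f f' t)
    (hf0 : f t = 0) (hh : ContinuousAt h t) :
    HasDerivAt (fun s => f s * h s) (f' * h t) t := by
  rw [hasDerivAt_iff_tendsto_slope] at hf ⊢
  have hslope : slope (fun s => f s * h s) t = fun s => slope f t s * h s := by
    funext s
    simp only [slope_def_module, hf0, zero_mul, sub_zero, smul_mul_assoc]
  rw [hslope]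
  exact hf.mul (hh.tendsto.mono_left nhdsWithin_le_nhds)

lemma eta_eq_zero {g m : ℝ} (h : (1 + m) ^ 3 + 9 * π ^ 2 * g = 0) : eta g m = 0 := by
  simp [eta, h]

lemma continuousAt_OmegaP {X : Type*} [TopologicalSpace X] {G M : X → ℝ} {t : X}
    (hG : ContinuousAt G t) (hM : ContinuousAt M t) (hm : 1 + M t ≠ 0) :
    ContinuousAt (fun s => OmegaP (G s) (M s)) t := by
  unfold OmegaP
  fun_prop (disch := positivity)

section Curve

variable {G M : ℝ → ℝ} {g' m' e' b' t : ℝ}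

lemma hasDerivAt_eta_of_factor_eq_zero (hG : HasDerivAt G g' t) (hM : HasDerivAt M m' t)
    (hm : 1 + M t ≠ 0)
    (hden : (1 + M t) ^ 5 - OmegaP (G t) (M t) ≠ 0)
    (hnum : (1 + M t) ^ 3 + 9 * π ^ 2 * G t = 0) :
    HasDerivAt (fun s => eta (G s) (M s))
      ((3 * (1 + M t) ^ 2 * m' + 9 * π ^ 2 * g') *
        (4 * π ^ 2 * G t / ((1 + M t) ^ 5 - OmegaP (G t) (M t)))) t := by
  have hfactor : HasDerivAt (fun s => (1 + M s) ^ 3 + 9 * π ^ 2 * G s)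
      (3 * (1 + M t) ^ 2 * m' + 9 * π ^ 2 * g') t := by
    simpa using ((hM.const_add 1).fun_pow 3).fun_add (hG.const_mul (9 * π ^ 2))
  have hcofactor : ContinuousAt
      (fun s => 4 * π ^ 2 * G s / ((1 + M s) ^ 5 - OmegaP (G s) (M s))) t :=
    (hG.continuousAt.const_mul _).div
      (((hM.continuousAt.const_add 1).pow 5).sub
        (continuousAt_OmegaP hG.continuousAt hM.continuousAt hm)) hden
  refine (hasDerivAt_mul_of_eq_zero hfactor hnum hcofactor).congr_of_eventuallyEq (.of_eq ?_)
  funext s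
  unfold eta
  ring

lemma hasDerivAt_betaM (hE : HasDerivAt (fun s => eta (G s) (M s)) e' t)
    (hG : HasDerivAt G g' t) (hM : HasDerivAt M m' t) (hm : 1 + M t ≠ 0) :
    HasDerivAt (fun s => betaM (G s) (M s))
      (-e' * M t - (2 + eta (G t) (M t)) * m'
        - 10 * π ^ 2 * (g' * (1 + eta (G t) (M t) / 6) + G t * (e' / 6)) / (1 + M t) ^ 2
        + 20 * π ^ 2 * G t * (1 + eta (G t) (M t) / 6) * m' / (1 + M t) ^ 3) t := by
  have hlinear := (hE.const_add 2).fun_neg.fun_mul hM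
  have hloop := ((hG.const_mul (10 * π ^ 2)).fun_mul ((hE.div_const 6).const_add 1)).fun_div
    ((hM.const_add 1).fun_pow 2) (pow_ne_zero 2 hm)
  refine (hlinear.fun_sub hloop).congr_deriv ?_
  field_simp
  ring

lemma hasDerivAt_betaG_of_eq_zero (hE : HasDerivAt (fun s => eta (G s) (M s)) e' t)
    (hB : HasDerivAt (fun s => betaM (G s) (M s)) b' t)
    (hG : ContinuousAt G t) (hM : ContinuousAt M t) (hm : 1 + M t ≠ 0)
    (heta : eta (G t) (M t) = 0) (hbeta : betaM (G t) (M t) = 0) :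
    HasDerivAt (fun s => betaG (G s) (M s))
      (e' * (-(G t * Omega (G t) (M t)) / (1 + M t) ^ 2)
        + b' * (2 * π ^ 2 * G t ^ 2 / (1 + M t) ^ 3)) t := by
  have hcoeffE : ContinuousAt (fun s => -(G s * Omega (G s) (M s)) / (1 + M s) ^ 2) t := by
    unfold Omega
    fun_prop (disch := positivity)
  have hcoeffB : ContinuousAt (fun s => 2 * π ^ 2 * G s ^ 2 / (1 + M s) ^ 3) t := by
    fun_prop (disch := positivity)
  refine ((hasDerivAt_mul_of_eq_zero hE heta hcoeffE).fun_add
    (hasDerivAt_mul_of_eq_zero hB hbeta hcoeffB)).congr_of_eventuallyEq (.of_eq ?_)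
  funext s
  unfold betaG
  ring

end Curve

lemma one_add_m1 : 1 + m1 = 9 / 4 := by
  norm_num [m1]

lemma pi_sq_mul_g1 : π ^ 2 * g1 = -81 / 64 := by
  unfold g1
  field_simp

lemma eta_numerator_factor_p1 : (1 + m1) ^ 3 + 9 * π ^ 2 * g1 = 0 := by
  rw [mul_assoc, pi_sq_mul_g1, one_add_m1]
  norm_num

lemma eta_denominator_p1 : (1 + m1) ^ 5 - OmegaP g1 m1 = 224775 / 4096 := by
  have hsq : 6 * π ^ 4 * g1 ^ 2 = 6 * (π ^ 2 * g1) ^ 2 := by ring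
  rw [OmegaP, hsq, pi_sq_mul_g1, one_add_m1]
  norm_num

lemma eta_p1 : eta g1 m1 = 0 :=
  eta_eq_zero eta_numerator_factor_p1

lemma betaM_p1 : betaM g1 m1 = 0 := by
  rw [betaM, eta_p1, mul_assoc 10, pi_sq_mul_g1, one_add_m1, m1]
  norm_num

section CurveThroughP1

variable {G M : ℝ → ℝ} {g' m' t : ℝ}

lemma hasDerivAt_eta_p1 (hG : HasDerivAt G g' t) (hM : HasDerivAt M m' t)
    (hg : G t = g1) (hm : M t = m1) :
    HasDerivAt (fun s => eta (G s) (M s)) (-1296 / 925 * m' - 768 / 925 * π ^ 2 * g') t := by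
  have hη := hasDerivAt_eta_of_factor_eq_zero hG hM (by norm_num [hm, one_add_m1])
    (by norm_num [hg, hm, eta_denominator_p1]) (by rw [hg, hm, eta_numerator_factor_p1])
  refine hη.congr_deriv ?_
  rw [hg, hm, mul_assoc 4, pi_sq_mul_g1, eta_denominator_p1, one_add_m1]
  ring

lemma hasDerivAt_betaM_p1 (hG : HasDerivAt G g' t) (hM : HasDerivAt M m' t)
    (hg : G t = g1) (hm : M t = m1) :
    HasDerivAt (fun s => betaM (G s) (M s))
      (-5086 / 1665 * m' - 19232 / 14985 * π ^ 2 * g') t := by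
  have hβ := hasDerivAt_betaM (hasDerivAt_eta_p1 hG hM hg hm) hG hM
    (by norm_num [hm, one_add_m1])
  refine hβ.congr_deriv ?_
  rw [hg, hm, eta_p1, one_add_m1, m1, g1]
  field_simp
  ring

lemma hasDerivAt_betaG_p1 (hG : HasDerivAt G g' t) (hM : HasDerivAt M m' t)
    (hg : G t = g1) (hm : M t = m1) :
    HasDerivAt (fun s => betaG (G s) (M s))
      (-569 / 185 / π ^ 2 * m' - 2788 / 1665 * g') t := by
  have hβ := hasDerivAt_betaG_of_eq_zero (hasDerivAt_eta_p1 hG hM hg hm)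
    (hasDerivAt_betaM_p1 hG hM hg hm) hG.continuousAt hM.continuousAt
    (by norm_num [hm, one_add_m1]) (by rw [hg, hm, eta_p1]) (by rw [hg, hm, betaM_p1])
  refine hβ.congr_deriv ?_
  rw [hg, hm, Omega, pi_sq_mul_g1, one_add_m1, g1]
  field_simp
  ring

end CurveThroughP1

lemma J11_eq : J11 = -5086 / 1665 := by
  simpa [J11] using
    (hasDerivAt_betaM_p1 (hasDerivAt_const m1 g1) (hasDerivAt_id' m1) rfl rfl).deriv

lemma J12_eq : J12 = -19232 / 14985 * π ^ 2 := by
  simpa [J12, neg_div] using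
    (hasDerivAt_betaM_p1 (hasDerivAt_id' g1) (hasDerivAt_const g1 m1) rfl rfl).deriv

lemma J21_eq : J21 = -569 / 185 / π ^ 2 := by
  simpa [J21] using
    (hasDerivAt_betaG_p1 (hasDerivAt_const m1 g1) (hasDerivAt_id' m1) rfl rfl).deriv

lemma J22_eq : J22 = -2788 / 1665 := by
  simpa [J22, neg_div] using
    (hasDerivAt_betaG_p1 (hasDerivAt_id' g1) (hasDerivAt_const g1 m1) rfl rfl).deriv

lemma jacobian_trace_eq : J11 + J22 = -7874 / 1665 := by
  rw [J11_eq, J22_eq]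
  norm_num

lemma jacobian_det_eq : J11 * J22 - J12 * J21 = 216 / 185 := by
  rw [J11_eq, J12_eq, J21_eq, J22_eq]
  field_simp
  norm_num

/-- At the fixed point `p₁` the Jacobian matrix of the Ward-constrained melonic flow has
two real strictly negative eigenvalues: its trace is strictly negative, its determinant
is strictly positive, and the square of its trace is at least four times its determinant
(numerically `(θ₁, θ₂) ≈ (−4.4, −0.3)`), so `p₁` has two relevant directions. -/
theorem p1_two_relevant_directions :
    J11 + J22 < 0 ∧ 0 < J11 * J22 - J12 * J21 ∧
      4 * (J11 * J22 - J12 * J21) ≤ (J11 + J22) ^ 2 := by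
  rw [jacobian_trace_eq, jacobian_det_eq]
  norm_num
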